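/- Let t_n := ⌈(1/2) n log n⌉. There exists a constant C such that for all sufficiently large n the following holds: for all 0 < δ < ρ/(2Q), every σ₀ ∈ 𝒮(δ), every initial state σ_* ∈ 𝒮_n and every R > 1, the congestion dynamics satisfies P_{σ_*}( σ(t_n) ∉ 𝒮(σ₀, R/√n) ) ≤ CQ²/R. -/

import Mathlib

/-!
Write `N = kap * Q`, `M = 1 + N - n`, and for weights `c : Fin n → ℝ` and a resource `v` put
`lin c v σ = ∑ i, c i * (1[σ i = v] - 1/Q)`. One step of the dynamics picks a player uniformly and
moves it to `w` with probability proportional to the number of free places at `w` once that player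
is removed, so the drift of `lin c v` is

  `-((∑ i, c i) * lin 1 v + (M - 1) * lin c v) / (n * M)`.

Hence `lin c v` is an eigenfunction when `∑ c = 0` (eigenvalue `1 - a`, where
`a = (M - 1)/(n * M)`) and when `c = 1` (a smaller eigenvalue). A step changes `lin c v` by at most
`1` if `|c i| ≤ 1`, so in both cases `E[(lin c v)²]` contracts by the factor `1 - 2a` up to an
additive `1` (`step_sq`). Iterating to time `⌈(1/2) n log n⌉` leaves a second moment of order `n`
(`second_moment`), uniformly in the initial state; the factor `n^(1/M)` that separates
`exp (-2 a t)` from `1/n` is bounded because `n / M ≤ rho / (1 - rho)`.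

The centred entry `(u, v)` of the load matrix is `lin c v + (m_u / n) * lin 1 v` with
`c i = 1[σ₀ i = u] - m_u / n`, which sums to zero, and `m_u ≥ n / (2Q)` because `σ₀` is near the
flat profile. Chebyshev's inequality over all `Q²` entries then gives a bound of order `1/R²`.
-/

open scoped BigOperators
open Filter MeasureTheory

noncomputable section

namespace CongestionPaper

attribute [local instance 10] Classical.propDecidable

/-- Evolution of a distribution under a transition kernel `p` on a finite state space:
`evolve p mu t` is the law at time `t` of the Markov chain with transition matrix `p`
and initial distribution `mu`. -/
def evolve {X : Type*} [Fintype X] (p : X -> X -> Real) (mu : X -> Real) : Nat -> X -> Real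
  | 0 => mu
  | (t+1) => fun y => ∑ x, evolve p mu t x * p x y

/-- Point mass at `x0`. -/
def delta {X : Type*} (x0 : X) : X -> Real := fun x => if x = x0 then 1 else 0

/-- Total variation distance between two distributions on a finite type,
as the supremum over events `A` of the difference of probabilities of `A`. -/
def tvDist {X : Type*} [Fintype X] (mu nu : X -> Real) : Real :=
  ⨆ A : Finset X, |∑ x ∈ A, (mu x - nu x)|

/-- Total variation distance between the pushforwards of `mu` and `nu` under `m`. -/
def tvDistOn {X : Type*} [Fintype X] {Y : Type*} (m : X -> Y) (mu nu : X -> Real) : Real :=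
  ⨆ B : Finset Y, |∑ x : X, (if m x ∈ B then mu x - nu x else 0)|

/-- Worst-case (over the initial state) total variation distance to `pi` at time `t`. -/
def DTV {X : Type*} [Fintype X] (p : X -> X -> Real) (pi : X -> Real) (t : Nat) : Real :=
  ⨆ x0 : X, tvDist (evolve p (delta x0) t) pi

/-- Mixing time `T^mix(eps)`. -/
def Tmix {X : Type*} [Fintype X] (p : X -> X -> Real) (pi : X -> Real) (eps : Real) : Nat :=
  sInf {t : Nat | DTV p pi t ≤ eps}

/-- Probability of a given trajectory `w` of length `T` for the chain started at `x0`. -/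
def pathProb {X : Type*} [Fintype X] (p : X -> X -> Real) (x0 : X) (T : Nat)
    (w : Fin (T+1) -> X) : Real :=
  (if w 0 = x0 then 1 else 0) * ∏ t : Fin T, p (w t.castSucc) (w t.succ)

/-- Probability that some state visited up to time `T` satisfies `Bad`. -/
def hitProb {X : Type*} [Fintype X] (p : X -> X -> Real) (x0 : X) (T : Nat)
    (Bad : X -> Prop) : Real :=
  ∑ w : Fin (T+1) -> X, (if ∃ t, Bad (w t) then pathProb p x0 T w else 0)

/-! ### The load profile chain -/

/-- Load profiles: `xi : S -> {0,...,kappa}` with `∑ xi v = n`, where `S = Fin Q`. -/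
abbrev LoadState (Q kap n : Nat) := {xi : Fin Q -> Fin (kap+1) // (∑ v, ((xi v : Nat))) = n}

/-- Transition matrix of the load profile chain on `Xi_{n,S,kappa}`. -/
def loadP (Q kap n : Nat) (xi xi' : LoadState Q kap n) : Real :=
  if xi' = xi then
    (∑ v, ((xi.1 v : Nat) : Real) * (((1 + kap - (xi.1 v : Nat) : Nat)) : Real))
      / ((n : Real) * ((1 + kap * Q - n : Nat) : Real))
  else
    (∑ vm, ∑ vp,
      if vm ≠ vp ∧ (xi'.1 vm : Nat) + 1 = (xi.1 vm : Nat) ∧ (xi'.1 vp : Nat) = (xi.1 vp : Nat) + 1 ∧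
          (∀ v, v ≠ vm -> v ≠ vp -> xi'.1 v = xi.1 v)
        then ((xi.1 vm : Nat) : Real) * (((kap - (xi.1 vp : Nat) : Nat)) : Real) else 0)
      / ((n : Real) * ((1 + kap * Q - n : Nat) : Real))

/-- Stationary weight `∏_v 1/(xi_v! (kappa - xi_v)!)`. -/
def loadWeight (Q kap n : Nat) (xi : LoadState Q kap n) : Real :=
  ∏ v, (1 : Real) /
    ((Nat.factorial (xi.1 v : Nat) : Real) * (Nat.factorial (kap - (xi.1 v : Nat)) : Real))

/-- The stationary distribution `pi_n` of the load profile chain. -/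
def loadPi (Q kap n : Nat) (xi : LoadState Q kap n) : Real :=
  loadWeight Q kap n xi / (∑ eta : LoadState Q kap n, loadWeight Q kap n eta)

/-- `xi ∈ Xi(delta)`: the normalized load profile is within Euclidean distance `delta`
of the constant vector `(rho/Q)_v`. -/
def loadNear (Q kap n : Nat) (rho : Real) (xi : LoadState Q kap n) (del : Real) : Prop :=
  Real.sqrt (∑ v, (((xi.1 v : Nat) : Real) / ((kap * Q : Nat) : Real) - rho / (Q : Real))^2) ≤ del

/-- `D(xi, xi') = (1/2) ∑_v |xi_v - xi'_v|`. -/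
def loadD (Q kap n : Nat) (xi xi' : LoadState Q kap n) : Real :=
  (1/2) * ∑ v, |((xi.1 v : Nat) : Real) - ((xi'.1 v : Nat) : Real)|

/-! ### The congestion dynamics (Glauber dynamics) -/

/-- `xi_v(sigma)`: the number of players adopting resource `v`. -/
def xiCount {Q n : Nat} (sg : Fin n -> Fin Q) (v : Fin Q) : Nat :=
  (Finset.univ.filter fun i => sg i = v).card

/-- Configurations: `sigma : [n] -> S` with `xi_v(sigma) ≤ kappa` for every `v`. -/
abbrev ConfigState (Q kap n : Nat) := {sg : Fin n -> Fin Q // ∀ v, xiCount sg v ≤ kap}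

/-- Transition matrix of the congestion dynamics. -/
def configP (Q kap n : Nat) (sg sg' : ConfigState Q kap n) : Real :=
  if sg' = sg then
    (∑ i, ((1 + kap - xiCount sg.1 (sg.1 i) : Nat) : Real))
      / ((n : Real) * ((1 + kap * Q - n : Nat) : Real))
  else
    (∑ i, if sg'.1 i ≠ sg.1 i ∧ (∀ j, j ≠ i -> sg'.1 j = sg.1 j)
        then ((kap - xiCount sg.1 (sg'.1 i) : Nat) : Real) else 0)
      / ((n : Real) * ((1 + kap * Q - n : Nat) : Real))

/-- The potential `F(sigma) = ∑_v ∑_{s=0}^{xi_v(sigma)} (log(kappa+1) - log(kappa+1-s))`. -/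
def potF (Q kap n : Nat) (sg : ConfigState Q kap n) : Real :=
  ∑ v, ∑ s ∈ Finset.range (xiCount sg.1 v + 1),
    (Real.log ((kap : Real) + 1) - Real.log ((kap : Real) + 1 - (s : Real)))

/-- The Gibbs measure `mu_n(sigma) = e^{-F(sigma)}/Z_n`. -/
def gibbs (Q kap n : Nat) (sg : ConfigState Q kap n) : Real :=
  Real.exp (-(potF Q kap n sg)) / (∑ ta : ConfigState Q kap n, Real.exp (-(potF Q kap n ta)))

/-- `sigma ∈ S(delta)`. -/
def configNear (Q kap n : Nat) (rho : Real) (sg : ConfigState Q kap n) (del : Real) : Prop :=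
  Real.sqrt (∑ v, ((xiCount sg.1 v : Real) / ((kap * Q : Nat) : Real) - rho / (Q : Real))^2) ≤ del

/-- The load matrix `xi^{sigma0}_{u,v}(sigma)`. -/
def ximat {Q n : Nat} (sg0 sg : Fin n -> Fin Q) (u v : Fin Q) : Nat :=
  (Finset.univ.filter fun i => sg0 i = u ∧ sg i = v).card

/-- `sigma ∈ S(sigma0, delta)`: for each `u`, the normalized `u`-th row of the
load matrix is within Euclidean distance `delta` of the constant vector `(1/Q)_v`. -/
def configNearMat (Q kap n : Nat) (sg0 sg : ConfigState Q kap n) (del : Real) : Prop :=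
  ∀ u, Real.sqrt
      (∑ v, ((ximat sg0.1 sg.1 u v : Real) / (xiCount sg0.1 u : Real) - 1 / (Q : Real))^2) ≤ del

/-- `D^{sigma0}(sigma, sigma') = ∑_u (1/2) ∑_v |xi^{sigma0}_{u,v}(sigma) - xi^{sigma0}_{u,v}(sigma')|`. -/
def matD (Q kap n : Nat) (sg0 sg sg' : ConfigState Q kap n) : Real :=
  ∑ u, (1/2) * ∑ v, |(ximat sg0.1 sg.1 u v : Real) - (ximat sg0.1 sg'.1 u v : Real)|

/-- The constant `cStar = (sqrt Q/(1-rho) + rho/(2Q))^{1/2}`. -/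
def cStar (Q : Nat) (rho : Real) : Real :=
  Real.sqrt (Real.sqrt (Q : Real) / (1 - rho) + rho / (2 * (Q : Real)))

/-! ### The base-exchange chain on `B^(Q)(n)` -/

/-- `B^(Q)(n) = {x ∈ Z_{≥0}^Q : ∑ x_i = n}`. -/
abbrev BState (Q n : Nat) := {x : Fin Q -> Fin (n+1) // (∑ i, ((x i : Nat))) = n}

/-- Transition matrix of the base-exchange chain on `B^(Q)(n)`. -/
def baseP (Q n : Nat) (x y : BState Q n) : Real :=
  if y = x then
    ∑ i, (if 0 < (x.1 i : Nat) then (1 : Real) / ((Q : Real) * (Q : Real)) else (1 : Real) / (Q : Real))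
  else
    ∑ i, ∑ j,
      if i ≠ j ∧ (y.1 i : Nat) + 1 = (x.1 i : Nat) ∧ (y.1 j : Nat) = (x.1 j : Nat) + 1 ∧
          (∀ v, v ≠ i -> v ≠ j -> y.1 v = x.1 v)
        then (1 : Real) / ((Q : Real) * (Q : Real)) else 0

/-- The lazy version of the base-exchange chain. -/
def lazyBaseP (Q n : Nat) (x y : BState Q n) : Real :=
  (1/2) * (if y = x then 1 else 0) + (1/2) * baseP Q n x y

/-- The uniform distribution on `B^(Q)(n)`. -/
def unifB (Q n : Nat) (x : BState Q n) : Real := 1 / (Fintype.card (BState Q n) : Real)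


/-! ### The one-step operator -/

section Step

variable {Q kap n : Nat}

/-- The (unnormalised) rate at which player `i`, once selected, moves to resource `v`: the number of
places free at `v` after removing player `i`. -/
def rate (kap : Nat) {Q n : Nat} (x : Fin n → Fin Q) (i : Fin n) (v : Fin Q) : Real :=
  (kap : Real) - xiCount x v + (if x i = v then 1 else 0)

/-- `∑ i, c i * (1[x i = v] - 1/Q)`, the centred occupation of resource `v` weighted by `c`. -/
def lin {Q n : Nat} (c : Fin n → Real) (v : Fin Q) (x : Fin n → Fin Q) : Real :=
  ∑ i, c i * ((if x i = v then 1 else 0) - 1 / (Q : Real))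

lemma xiCount_eq_sum (x : Fin n → Fin Q) (v : Fin Q) :
    (xiCount x v : Real) = ∑ i, (if x i = v then (1 : Real) else 0) := by
  unfold xiCount
  rw [Finset.sum_boole]

lemma sum_xiCount (x : Fin n → Fin Q) : ∑ v, (xiCount x v : Real) = n := by
  simp_rw [xiCount_eq_sum]
  rw [Finset.sum_comm]
  simp

lemma card_le (x : ConfigState Q kap n) : n ≤ kap * Q := by
  have h1 := sum_xiCount x.1
  have h2 : ∑ v, (xiCount x.1 v : Real) ≤ ∑ _v : Fin Q, (kap : Real) :=
    Finset.sum_le_sum fun v _ => by exact_mod_cast x.2 v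
  rw [h1] at h2
  simp only [Finset.sum_const, Finset.card_univ, Fintype.card_fin, nsmul_eq_mul] at h2
  have : (n : Real) ≤ ((kap * Q : Nat) : Real) := by push_cast; linarith
  exact_mod_cast this

lemma sum_rate (x : Fin n → Fin Q) (i : Fin n) :
    ∑ v, rate kap x i v = 1 + (kap : Real) * Q - n := by
  unfold rate
  rw [Finset.sum_add_distrib, Finset.sum_sub_distrib, sum_xiCount]
  simp
  ring

lemma rate_nonneg (x : ConfigState Q kap n) (i : Fin n) (v : Fin Q) : 0 ≤ rate kap x.1 i v := by
  unfold rate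
  have h : (xiCount x.1 v : Real) ≤ kap := by exact_mod_cast x.2 v
  split_ifs <;> linarith

lemma xiCount_update_le (x : Fin n → Fin Q) (i : Fin n) (v w : Fin Q) :
    xiCount (Function.update x i v) w
      ≤ xiCount x w + (if w = v ∧ x i ≠ v then 1 else 0) := by
  have h : (xiCount (Function.update x i v) w : Real)
      ≤ xiCount x w + (if w = v ∧ x i ≠ v then 1 else 0) := by
    rw [xiCount_eq_sum, xiCount_eq_sum, ← Finset.add_sum_erase _ _ (Finset.mem_univ i),
      ← Finset.add_sum_erase (a := i) _ (fun j => if x j = w then (1 : Real) else 0)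
        (Finset.mem_univ i)]
    have : ∑ j ∈ Finset.univ.erase i, (if Function.update x i v j = w then (1 : Real) else 0)
        = ∑ j ∈ Finset.univ.erase i, (if x j = w then (1 : Real) else 0) := by
      refine Finset.sum_congr rfl fun j hj => ?_
      rw [Function.update_of_ne (Finset.ne_of_mem_erase hj)]
    rw [this]
    simp only [Function.update_self]
    by_cases h1 : v = w
    · subst h1
      by_cases h2 : x i = v <;> simp [h2] <;> linarith
    · simp only [h1, if_false]
      split_ifs <;> linarith
  exact_mod_cast h

/-- Resources that would exceed their capacity are chosen at rate zero. -/
lemma rate_eq_zero (x : ConfigState Q kap n) (i : Fin n) (v : Fin Q)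
    (h : ¬ ∀ w, xiCount (Function.update x.1 i v) w ≤ kap) : rate kap x.1 i v = 0 := by
  push Not at h
  obtain ⟨w, hw⟩ := h
  have h1 := xiCount_update_le x.1 i v w
  have h2 := x.2 w
  by_cases h3 : w = v ∧ x.1 i ≠ v
  · rw [if_pos h3] at h1
    obtain ⟨rfl, h4⟩ := h3
    have h5 : xiCount x.1 w = kap := by omega
    simp [rate, h5, h4]
  · rw [if_neg h3] at h1
    omega

/-- The transition matrix as a sum over single-player updates. -/
lemma configP_eq (x y : ConfigState Q kap n) :
    configP Q kap n x y = (∑ i, ∑ v, if y.1 = Function.update x.1 i v then rate kap x.1 i v else 0)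
      / ((n : Real) * ((1 + kap * Q - n : Nat) : Real)) := by
  unfold configP
  split_ifs with h
  · subst h
    congr 1
    refine Finset.sum_congr rfl fun i _ => ?_
    rw [Finset.sum_eq_single (y.1 i)]
    · rw [if_pos (by simp), Nat.cast_sub (by have := y.2 (y.1 i); omega)]
      simp [rate]
      ring
    · intro v _ hv
      rw [if_neg]
      intro hc
      exact hv (by have := congrFun hc i; simpa using this.symm)
    · simp
  · congr 1
    refine Finset.sum_congr rfl fun i _ => ?_
    rw [Finset.sum_eq_single (y.1 i)]
    · have key : (y.1 i ≠ x.1 i ∧ ∀ j, j ≠ i → y.1 j = x.1 j)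
          ↔ y.1 = Function.update x.1 i (y.1 i) := by
        constructor
        · rintro ⟨_, h2⟩
          rw [Function.eq_update_iff]
          exact ⟨rfl, h2⟩
        · intro h2
          refine ⟨fun h3 => h (Subtype.ext ?_), (Function.eq_update_iff.1 h2).2⟩
          rw [h2, h3, Function.update_eq_self]
      by_cases hk : y.1 i ≠ x.1 i ∧ ∀ j, j ≠ i → y.1 j = x.1 j
      · rw [if_pos hk, if_pos (key.1 hk), Nat.cast_sub (x.2 _)]
        simp [rate, hk.1.symm]
      · rw [if_neg hk, if_neg (fun h => hk (key.2 h))]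
    · intro v _ hv
      rw [if_neg]
      intro hc
      exact hv (by have := congrFun hc i; simpa using this.symm)
    · simp

lemma configP_nonneg (x y : ConfigState Q kap n) : 0 ≤ configP Q kap n x y := by
  rw [configP_eq]
  refine div_nonneg (Finset.sum_nonneg fun i _ => Finset.sum_nonneg fun v _ => ?_) (by positivity)
  split_ifs
  · exact rate_nonneg x i v
  · exact le_rfl

lemma step_apply (x : ConfigState Q kap n) (F : (Fin n → Fin Q) → Real) :
    ∑ y : ConfigState Q kap n, configP Q kap n x y * F y.1
      = (∑ i, ∑ v, rate kap x.1 i v * F (Function.update x.1 i v))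
        / ((n : Real) * (1 + (kap : Real) * Q - n)) := by
  have hM : ((1 + kap * Q - n : Nat) : Real) = 1 + (kap : Real) * Q - n := by
    rw [Nat.cast_sub (by have := card_le x; omega)]; push_cast; ring
  simp_rw [configP_eq, hM, div_mul_eq_mul_div, Finset.sum_mul]
  rw [← Finset.sum_div]
  congr 1
  rw [Finset.sum_comm]
  refine Finset.sum_congr rfl fun i _ => ?_
  rw [Finset.sum_comm]
  refine Finset.sum_congr rfl fun v _ => ?_
  by_cases hv : ∀ w, xiCount (Function.update x.1 i v) w ≤ kap
  · rw [Finset.sum_eq_single ⟨Function.update x.1 i v, hv⟩]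
    · simp
    · intro y _ hy
      rw [if_neg (fun h => hy (Subtype.ext h)), zero_mul]
    · simp
  · rw [rate_eq_zero x i v hv]
    simp

lemma lin_update (c : Fin n → Real) (v w : Fin Q) (x : Fin n → Fin Q) (i : Fin n) :
    lin c v (Function.update x i w)
      = lin c v x + c i * ((if w = v then 1 else 0) - (if x i = v then 1 else 0)) := by
  unfold lin
  rw [← Finset.add_sum_erase _ _ (Finset.mem_univ i),
    ← Finset.add_sum_erase (a := i) _ (fun j => c j * ((if x j = v then (1 : Real) else 0) - 1 / Q))
        (Finset.mem_univ i)]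
  have : ∑ j ∈ Finset.univ.erase i,
        c j * ((if Function.update x i w j = v then (1 : Real) else 0) - 1 / Q)
      = ∑ j ∈ Finset.univ.erase i, c j * ((if x j = v then (1 : Real) else 0) - 1 / Q) := by
    refine Finset.sum_congr rfl fun j hj => ?_
    rw [Function.update_of_ne (Finset.ne_of_mem_erase hj)]
  rw [this, Function.update_self]
  ring

lemma lin_one (v : Fin Q) (x : Fin n → Fin Q) :
    lin (fun _ => 1) v x = xiCount x v - (n : Real) / Q := by
  simp [lin, xiCount_eq_sum, Finset.sum_sub_distrib, div_eq_mul_inv]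

/-- The drift of `lin c v`, before normalisation by `n * (1 + kap * Q - n)`. -/
lemma drift (hQ : 0 < Q) (c : Fin n → Real) (v : Fin Q) (x : Fin n → Fin Q) :
    ∑ i, ∑ w, rate kap x i w * (c i * ((if w = v then 1 else 0) - (if x i = v then 1 else 0)))
      = -((∑ i, c i) * lin (fun _ => 1) v x + ((kap : Real) * Q - n) * lin c v x) := by
  have hQ' : (Q : Real) ≠ 0 := by positivity
  have h1 : ∀ i, ∑ w, rate kap x i w *
        (c i * ((if w = v then (1 : Real) else 0) - (if x i = v then 1 else 0)))
      = c i * ((kap : Real) - xiCount x v) -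
          ((kap : Real) * Q - n) * (c i * (if x i = v then 1 else 0)) := by
    intro i
    have e1 : ∑ w, rate kap x i w *
        (c i * ((if w = v then (1 : Real) else 0) - (if x i = v then 1 else 0)))
      = c i * ∑ w, rate kap x i w * (if w = v then (1 : Real) else 0)
        - c i * (if x i = v then 1 else 0) * ∑ w, rate kap x i w := by
      rw [Finset.mul_sum, Finset.mul_sum, ← Finset.sum_sub_distrib]
      refine Finset.sum_congr rfl fun w _ => ?_
      ring
    rw [e1, sum_rate]
    simp only [mul_ite, mul_one, mul_zero, Finset.sum_ite_eq', Finset.mem_univ, if_true]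
    unfold rate
    split_ifs <;> ring
  simp_rw [h1]
  rw [Finset.sum_sub_distrib, ← Finset.sum_mul, ← Finset.mul_sum, lin_one]
  have h2 : lin c v x = ∑ i, c i * (if x i = v then (1 : Real) else 0) - (∑ i, c i) / Q := by
    unfold lin
    simp_rw [mul_sub]
    rw [Finset.sum_sub_distrib, ← Finset.sum_mul]
    ring
  rw [h2]
  field_simp
  ring

/-- Contraction of the square of `lin c v` in one step. The hypothesis `hc` holds both for `∑ c = 0`
and for `c = 1`. -/
lemma step_sq (hQ : 0 < Q) (hn : 0 < n) (c : Fin n → Real) (hc1 : ∀ i, |c i| ≤ 1) (v : Fin Q)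
    (hc : ∀ x : Fin n → Fin Q, 0 ≤ (∑ i, c i) * (lin (fun _ => 1) v x * lin c v x))
    (x : ConfigState Q kap n) :
    ∑ y : ConfigState Q kap n, configP Q kap n x y * (lin c v y.1) ^ 2
      ≤ (1 - 2 * (((kap : Real) * Q - n) / ((n : Real) * (1 + (kap : Real) * Q - n))))
          * (lin c v x.1) ^ 2 + 1 := by
  have hcard : (n : Real) ≤ (kap : Real) * Q := by exact_mod_cast card_le x
  have hn' : (0 : Real) < n := by exact_mod_cast hn
  have hM : 0 < 1 + (kap : Real) * Q - n := by linarith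
  rw [step_apply x (fun y => (lin c v y) ^ 2)]
  have hD : 0 < (n : Real) * (1 + (kap : Real) * Q - n) := mul_pos hn' hM
  rw [div_le_iff₀ hD]
  set L := lin c v x.1 with hL
  have h1 : ∑ i, ∑ w, rate kap x.1 i w * (lin c v (Function.update x.1 i w)) ^ 2
      ≤ ∑ i, ∑ w, (rate kap x.1 i w * (L ^ 2 + 1) + 2 * L * (rate kap x.1 i w *
        (c i * ((if w = v then (1 : Real) else 0) - (if x.1 i = v then 1 else 0))))) := by
    refine Finset.sum_le_sum fun i _ => Finset.sum_le_sum fun w _ => ?_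
    rw [lin_update, ← hL]
    set d := c i * ((if w = v then (1 : Real) else 0) - (if x.1 i = v then 1 else 0)) with hd
    have hd1 : d ^ 2 ≤ 1 := by
      have hci : c i ^ 2 ≤ 1 := by rw [sq_le_one_iff_abs_le_one]; exact hc1 i
      rw [hd]
      split_ifs <;> simp [hci]
    nlinarith [rate_nonneg x i w]
  refine h1.trans ?_
  simp_rw [Finset.sum_add_distrib, ← Finset.mul_sum, ← Finset.sum_mul]
  rw [drift hQ, ← hL]
  simp_rw [sum_rate]
  simp only [Finset.sum_const, Finset.card_univ, Fintype.card_fin, nsmul_eq_mul]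
  have h2 := hc x.1
  rw [← hL] at h2
  have e : ((1 - 2 * (((kap : Real) * Q - n) / ((n : Real) * (1 + (kap : Real) * Q - n))))
          * L ^ 2 + 1) * ((n : Real) * (1 + (kap : Real) * Q - n))
      = (L ^ 2 + 1) * ((n : Real) * (1 + (kap : Real) * Q - n)) - 2 * ((kap : Real) * Q - n) * L ^ 2 := by
    field_simp
    ring
  rw [e]
  nlinarith

lemma sum_configP (hn : 0 < n) (x : ConfigState Q kap n) :
    ∑ y : ConfigState Q kap n, configP Q kap n x y = 1 := by
  have h := step_apply x (fun _ => 1)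
  simp only [mul_one] at h
  rw [h]
  simp_rw [sum_rate]
  have hcard : (n : Real) ≤ (kap : Real) * Q := by exact_mod_cast card_le x
  have hn' : (0 : Real) < n := by exact_mod_cast hn
  have hM : 0 < 1 + (kap : Real) * Q - n := by linarith
  simp only [Finset.sum_const, Finset.card_univ, Fintype.card_fin, nsmul_eq_mul]
  exact div_self (mul_pos hn' hM).ne'

end Step

/-! ### Iteration in time -/

section Iterate

variable {X : Type*} [Fintype X]

lemma evolve_nonneg (p : X → X → Real) (hp : ∀ x y, 0 ≤ p x y) (x0 : X) (t : Nat) (y : X) :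
    0 ≤ evolve p (delta x0) t y := by
  induction t generalizing y with
  | zero => simp only [evolve, delta]; split_ifs <;> norm_num
  | succ t ih => exact Finset.sum_nonneg fun x _ => mul_nonneg (ih x) (hp x y)

lemma sum_evolve_succ (p : X → X → Real) (mu : X → Real) (t : Nat) (f : X → Real) :
    ∑ y, evolve p mu (t + 1) y * f y = ∑ x, evolve p mu t x * ∑ y, p x y * f y := by
  simp only [evolve, Finset.sum_mul, Finset.mul_sum]
  rw [Finset.sum_comm]
  simp only [mul_assoc]

lemma sum_evolve (p : X → X → Real) (hp1 : ∀ x, ∑ y, p x y = 1) (x0 : X) (t : Nat) :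
    ∑ y, evolve p (delta x0) t y = 1 := by
  induction t with
  | zero => simp [evolve, delta]
  | succ t ih =>
    have h := sum_evolve_succ p (delta x0) t (fun _ => 1)
    simp only [mul_one, hp1] at h
    rw [h, ih]

/-- If one step maps `f` below `l * f + 1`, then `f` has expectation at most `l ^ t * f x0 + K`,
where `K` bounds the geometric series with ratio `l`. -/
lemma iterate_bound (p : X → X → Real) (hp : ∀ x y, 0 ≤ p x y) (hp1 : ∀ x, ∑ y, p x y = 1)
    (f : X → Real) (l K : Real) (hl : 0 ≤ l) (hK : 0 ≤ K) (hlK : l * K + 1 ≤ K)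
    (hf : ∀ x, ∑ y, p x y * f y ≤ l * f x + 1) (x0 : X) (t : Nat) :
    ∑ y, evolve p (delta x0) t y * f y ≤ l ^ t * f x0 + K := by
  induction t with
  | zero => simpa [evolve, delta] using hK
  | succ t ih =>
    rw [sum_evolve_succ]
    calc ∑ x, evolve p (delta x0) t x * ∑ y, p x y * f y
        ≤ ∑ x, evolve p (delta x0) t x * (l * f x + 1) :=
          Finset.sum_le_sum fun x _ =>
            mul_le_mul_of_nonneg_left (hf x) (evolve_nonneg p hp x0 t x)
      _ = l * ∑ x, evolve p (delta x0) t x * f x + 1 := by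
          simp_rw [mul_add, Finset.sum_add_distrib, mul_one, sum_evolve p hp1, Finset.mul_sum]
          congr 1
          refine Finset.sum_congr rfl fun x _ => ?_
          ring
      _ ≤ l * (l ^ t * f x0 + K) + 1 := by gcongr
      _ = l ^ (t + 1) * f x0 + (l * K + 1) := by ring
      _ ≤ _ := by linarith

end Iterate

/-! ### Second moments at the time `(1/2) n log n` -/

lemma abs_lin_le {Q n : Nat} (hQ : 0 < Q) (c : Fin n → Real) (hc1 : ∀ i, |c i| ≤ 1) (v : Fin Q)
    (x : Fin n → Fin Q) : |lin c v x| ≤ n := by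
  unfold lin
  refine (Finset.abs_sum_le_sum_abs _ _).trans ?_
  calc ∑ i, |c i * ((if x i = v then (1 : Real) else 0) - 1 / Q)| ≤ ∑ _i : Fin n, (1 : Real) := by
        refine Finset.sum_le_sum fun i _ => ?_
        rw [abs_mul]
        have hq : (1 : Real) / Q ≤ 1 := by
          rw [div_le_one (by positivity)]; exact_mod_cast hQ
        have hq0 : (0 : Real) ≤ 1 / Q := by positivity
        refine mul_le_one₀ (hc1 i) (abs_nonneg _) ?_
        rw [abs_le]
        split_ifs <;> constructor <;> linarith
    _ = n := by simp

/-- At time `⌈(1/2) n log n⌉` the second moment of `lin c v` is of order `n`. -/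
lemma second_moment {Q kap n : Nat} (hQ : 0 < Q) (hn : 2 ≤ n) (rho : Real) (hrho1 : rho < 1)
    (hnr : (n : Real) ≤ rho * ((kap : Real) * Q))
    (c : Fin n → Real) (hc1 : ∀ i, |c i| ≤ 1) (v : Fin Q)
    (hc : ∀ x : Fin n → Fin Q, 0 ≤ (∑ i, c i) * (lin (fun _ => 1) v x * lin c v x))
    (x0 : ConfigState Q kap n) :
    ∑ y, evolve (configP Q kap n) (delta x0) ⌈(1/2) * (n : Real) * Real.log (n : Real)⌉₊ y
        * (lin c v y.1) ^ 2 ≤ (Real.exp (rho / (1 - rho)) + 1) * n := by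
  have hn0 : 0 < n := by omega
  have hn' : (2 : Real) ≤ n := by exact_mod_cast hn
  set N : Real := (kap : Real) * Q with hN
  have hNpos : 0 < N := by
    have : 0 ≤ N := by positivity
    rcases this.eq_or_lt with h | h
    · rw [← h] at hnr; linarith
    · exact h
  have hlt : (n : Real) < N := by nlinarith
  -- the gap `N - n` is a positive integer
  have hgap : (n : Real) + 1 ≤ N := by
    have : (n : Real) < ((kap * Q : Nat) : Real) := by push_cast; exact hlt
    have h2 : n + 1 ≤ kap * Q := by exact_mod_cast this
    have h3 : ((n + 1 : Nat) : Real) ≤ ((kap * Q : Nat) : Real) := by exact_mod_cast h2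
    push_cast at h3; exact h3
  set M : Real := 1 + N - n with hM
  have hM2 : 2 ≤ M := by rw [hM]; linarith
  set a : Real := (N - n) / (n * M) with ha
  have haM : a = (1 - 1 / M) / n := by
    rw [ha]; field_simp; rw [hM]; ring
  have hMinv : 1 / M ≤ 1 / 2 := one_div_le_one_div_of_le (by norm_num) hM2
  have hMinv0 : 0 ≤ 1 / M := by positivity
  have han : 2 * a * n = 2 - 2 * (1 / M) := by rw [haM]; field_simp
  have hl : 0 ≤ 1 - 2 * a := by nlinarith
  have hK : (1 - 2 * a) * n + 1 ≤ n := by nlinarith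
  have hb := iterate_bound (configP Q kap n) configP_nonneg (sum_configP hn0)
    (fun y => (lin c v y.1) ^ 2) (1 - 2 * a) n hl (by positivity) hK
    (fun x => step_sq hQ hn0 c hc1 v hc x) x0 ⌈(1/2) * (n : Real) * Real.log (n : Real)⌉₊
  refine hb.trans ?_
  set t := ⌈(1/2) * (n : Real) * Real.log (n : Real)⌉₊ with ht
  have ht1 : (1/2) * (n : Real) * Real.log (n : Real) ≤ t := Nat.le_ceil _
  have hlog0 : 0 ≤ Real.log n := Real.log_nonneg (by linarith)
  have hlogn : Real.log n ≤ n := (Real.log_le_sub_one_of_pos (by linarith)).trans (by linarith)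
  have ha0 : 0 ≤ a := by rw [haM]; apply div_nonneg <;> linarith
  have hpow : (1 - 2 * a) ^ t ≤ Real.exp (rho / (1 - rho)) / n := by
    calc (1 - 2 * a) ^ t ≤ (Real.exp (-(2 * a))) ^ t :=
          pow_le_pow_left₀ hl (Real.one_sub_le_exp_neg _) _
      _ = Real.exp (-(2 * a * t)) := by rw [← Real.exp_nat_mul]; congr 1; ring
      _ ≤ Real.exp (rho / (1 - rho) - Real.log n) := by
          apply Real.exp_le_exp.2
          have h1 : 2 * a * ((1/2) * (n : Real) * Real.log (n : Real)) ≤ 2 * a * t :=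
            mul_le_mul_of_nonneg_left ht1 (by positivity)
          have h2 : 2 * a * ((1/2) * (n : Real) * Real.log (n : Real))
              = Real.log n - Real.log n / M := by
            calc _ = (2 * a * n) * (1 / 2) * Real.log n := by ring
              _ = _ := by rw [han]; ring
          have h3 : Real.log n / M ≤ rho / (1 - rho) := by
            rw [div_le_div_iff₀ (by linarith) (by linarith)]
            have hr : 0 ≤ rho := by nlinarith
            have : (1 - rho) * N ≤ M := by rw [hM]; linarith
            calc Real.log n * (1 - rho) ≤ (rho * N) * (1 - rho) := by
                  apply mul_le_mul_of_nonneg_right _ (by linarith); linarith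
              _ = rho * ((1 - rho) * N) := by ring
              _ ≤ rho * M := mul_le_mul_of_nonneg_left this hr
          linarith
      _ = Real.exp (rho / (1 - rho)) / n := by
          rw [Real.exp_sub, Real.exp_log (by linarith)]
  have hsq : (lin c v x0.1) ^ 2 ≤ (n : Real) ^ 2 := by
    rw [sq_le_sq, abs_of_nonneg (by positivity : (0 : Real) ≤ n)]
    exact abs_lin_le hQ c hc1 v x0.1
  calc (1 - 2 * a) ^ t * (lin c v x0.1) ^ 2 + n
      ≤ Real.exp (rho / (1 - rho)) / n * (n : Real) ^ 2 + n := by gcongr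
    _ = _ := by field_simp

lemma xiCount_le_n {Q n : Nat} (x : Fin n → Fin Q) (u : Fin Q) : xiCount x u ≤ n := by
  unfold xiCount
  exact (Finset.card_le_univ _).trans (by simp)

/-- Second moment bound for a single centred entry of the load matrix. -/
lemma entry_moment {Q kap n : Nat} (hQ : 0 < Q) (hn : 2 ≤ n) (rho : Real) (hrho1 : rho < 1)
    (hnr : (n : Real) ≤ rho * ((kap : Real) * Q)) (s : Fin n → Fin Q) (u v : Fin Q)
    (x0 : ConfigState Q kap n) :
    ∑ y, evolve (configP Q kap n) (delta x0) ⌈(1/2) * (n : Real) * Real.log (n : Real)⌉₊ y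
        * ((ximat s y.1 u v : Real) - (xiCount s u : Real) / Q) ^ 2
      ≤ 4 * (Real.exp (rho / (1 - rho)) + 1) * n := by
  have hn' : (2 : Real) ≤ n := by exact_mod_cast hn
  set r : Real := (xiCount s u : Real) / n with hr
  have hr0 : 0 ≤ r := by positivity
  have hr1 : r ≤ 1 := by
    rw [hr, div_le_one (by linarith)]; exact_mod_cast xiCount_le_n s u
  set c : Fin n → Real := fun i => (if s i = u then 1 else 0) - r with hc
  have hcs : ∑ i, c i = 0 := by
    rw [hc, Finset.sum_sub_distrib, ← xiCount_eq_sum]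
    simp only [Finset.sum_const, Finset.card_univ, Fintype.card_fin, nsmul_eq_mul]
    rw [hr]; field_simp; ring
  have hc1 : ∀ i, |c i| ≤ 1 := by
    intro i
    simp only [hc]
    rw [abs_le]
    split_ifs <;> constructor <;> linarith
  have b1 := second_moment hQ hn rho hrho1 hnr c hc1 v (fun x => by rw [hcs]; simp) x0
  have b2 := second_moment hQ hn rho hrho1 hnr (fun _ => 1) (by simp) v
    (fun x => by
      have := mul_self_nonneg (lin (fun _ => 1) v x)
      refine mul_nonneg (by simp) this) x0
  have hdec : ∀ y : Fin n → Fin Q, (ximat s y u v : Real) - (xiCount s u : Real) / Q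
      = lin c v y + r * lin (fun _ => 1) v y := by
    intro y
    have h1 : (ximat s y u v : Real)
        = ∑ i, (if s i = u then (1 : Real) else 0) * (if y i = v then 1 else 0) := by
      unfold ximat
      rw [← Finset.sum_boole]
      refine Finset.sum_congr rfl fun i _ => ?_
      by_cases h1 : s i = u <;> by_cases h2 : y i = v <;> simp [h1, h2]
    rw [h1, xiCount_eq_sum, Finset.sum_div, ← Finset.sum_sub_distrib]
    unfold lin
    rw [Finset.mul_sum, ← Finset.sum_add_distrib]
    refine Finset.sum_congr rfl fun i _ => ?_
    simp only [hc]
    ring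
  set E := evolve (configP Q kap n) (delta x0) ⌈(1/2) * (n : Real) * Real.log (n : Real)⌉₊
  have hE : ∀ y, 0 ≤ E y := fun y => evolve_nonneg _ configP_nonneg _ _ _
  calc ∑ y, E y * ((ximat s y.1 u v : Real) - (xiCount s u : Real) / Q) ^ 2
      ≤ ∑ y, (2 * (E y * (lin c v y.1) ^ 2) + 2 * (E y * (lin (fun _ => 1) v y.1) ^ 2)) := by
        refine Finset.sum_le_sum fun y _ => ?_
        rw [hdec]
        set A := lin c v y.1
        set B := lin (fun _ => 1) v y.1
        have h1 : (A + r * B) ^ 2 ≤ 2 * A ^ 2 + 2 * B ^ 2 := by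
          have h2 : (r * B) ^ 2 ≤ B ^ 2 := by
            rw [mul_pow]
            exact mul_le_of_le_one_left (sq_nonneg B) (pow_le_one₀ hr0 hr1)
          nlinarith [sq_nonneg (A - r * B)]
        calc E y * (A + r * B) ^ 2 ≤ E y * (2 * A ^ 2 + 2 * B ^ 2) :=
              mul_le_mul_of_nonneg_left h1 (hE y)
          _ = _ := by ring
    _ = 2 * ∑ y, (E y * (lin c v y.1) ^ 2) + 2 * ∑ y, (E y * (lin (fun _ => 1) v y.1) ^ 2) := by
        rw [Finset.sum_add_distrib, Finset.mul_sum, Finset.mul_sum]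
    _ ≤ _ := by linarith


/-- at time `t_n = ⌈(1/2) n log n⌉` the load matrix is within
`R/sqrt n` of flat except with probability `C Q^2 / R` (Lemma 3.4). -/
theorem statement11 (Q : Nat) (hQ : 2 ≤ Q) (rho : Real) (hrho0 : 0 < rho) (hrho1 : rho < 1) :
    ∃ C n0 : Real, ∀ kap : Nat, 0 < kap → ∀ n : Nat, n = ⌊rho * ((kap * Q : Nat) : Real)⌋₊ →
      n0 ≤ (n : Real) →
      ∀ del : Real, 0 < del → del < rho / (2 * Q) →
      ∀ sg0 : ConfigState Q kap n, configNear Q kap n rho sg0 del →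
      ∀ sgs : ConfigState Q kap n, ∀ R : Real, 1 < R →
        (∑ sg : ConfigState Q kap n,
            if ¬ configNearMat Q kap n sg0 sg (R / Real.sqrt (n : Real)) then
              evolve (configP Q kap n) (delta sgs) ⌈(1/2) * (n : Real) * Real.log (n : Real)⌉₊ sg
            else 0)
          ≤ C * (Q : Real)^2 / R := by
  refine ⟨16 * (Real.exp (rho / (1 - rho)) + 1) * (Q : Real) ^ 2, 2, ?_⟩
  intro kap hkap n hn hn2 del hdel0 hdel sg0 hnear sgs R hR
  have hQ0 : 0 < Q := by omega
  have hQpos : (0 : Real) < Q := by exact_mod_cast hQ0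
  have hkpos : (0 : Real) < kap := by exact_mod_cast hkap
  have hn2' : 2 ≤ n := by exact_mod_cast hn2
  have hnr : (n : Real) ≤ rho * ((kap : Real) * Q) := by
    have h := Nat.floor_le (a := rho * ((kap * Q : Nat) : Real)) (by positivity)
    rw [← hn] at h
    push_cast at h
    exact h
  set D := Real.exp (rho / (1 - rho)) + 1 with hD
  have hD0 : 0 < D := by positivity
  -- every row of the load matrix has at least `n / (2Q)` players
  have hm : ∀ u, (n : Real) / (2 * Q) ≤ (xiCount sg0.1 u : Real) := by
    intro u
    unfold configNear at hnear
    have h1 : |(xiCount sg0.1 u : Real) / ((kap * Q : Nat) : Real) - rho / (Q : Real)| ≤ del := by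
      refine (Real.abs_le_sqrt ?_).trans hnear
      exact Finset.single_le_sum
        (f := fun v => ((xiCount sg0.1 v : Real) / ((kap * Q : Nat) : Real) - rho / (Q : Real))^2)
        (fun v _ => sq_nonneg _) (Finset.mem_univ u)
    have h2 := (abs_le.1 h1).1
    have h3 : rho / (2 * Q) ≤ (xiCount sg0.1 u : Real) / ((kap * Q : Nat) : Real) := by
      have : rho / (Q : Real) = rho / (2 * Q) + rho / (2 * Q) := by field_simp; ring
      linarith
    rw [le_div_iff₀ (by positivity)] at h3
    push_cast at h3
    refine le_trans ?_ h3
    rw [div_mul_eq_mul_div]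
    gcongr
  have hmpos : ∀ u, (0 : Real) < (xiCount sg0.1 u : Real) := fun u =>
    lt_of_lt_of_le (by positivity) (hm u)
  set E := evolve (configP Q kap n) (delta sgs) ⌈(1/2) * (n : Real) * Real.log (n : Real)⌉₊
    with hEdef
  have hE : ∀ y, 0 ≤ E y := fun y => evolve_nonneg _ configP_nonneg _ _ _
  have hnpos : (0 : Real) < n := by linarith
  have hRpos : 0 < R := by linarith
  set W : Fin Q → Fin Q → ConfigState Q kap n → Real := fun u v sg =>
    ((ximat sg0.1 sg.1 u v : Real) - (xiCount sg0.1 u : Real) / Q) ^ 2 with hW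
  have hW0 : ∀ u v sg, 0 ≤ W u v sg := fun u v sg => sq_nonneg _
  have hmarkov : ∀ sg : ConfigState Q kap n,
      (if ¬ configNearMat Q kap n sg0 sg (R / Real.sqrt (n : Real)) then E sg else 0)
        ≤ ∑ u, ∑ v, 4 * (Q : Real) ^ 2 / (n * R ^ 2) * (E sg * W u v sg) := by
    intro sg
    have hnn : ∀ u ∈ Finset.univ,
        0 ≤ ∑ v, 4 * (Q : Real) ^ 2 / (n * R ^ 2) * (E sg * W u v sg) := fun u _ =>
      Finset.sum_nonneg fun v _ => mul_nonneg (by positivity) (mul_nonneg (hE sg) (hW0 u v sg))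
    by_cases h : ¬ configNearMat Q kap n sg0 sg (R / Real.sqrt (n : Real))
    · rw [if_pos h]
      unfold configNearMat at h
      push Not at h
      obtain ⟨u, hu⟩ := h
      refine le_trans ?_ (Finset.single_le_sum hnn (Finset.mem_univ u))
      rw [Real.lt_sqrt (by positivity), div_pow, Real.sq_sqrt hnpos.le] at hu
      have h1 : ∑ v, ((ximat sg0.1 sg.1 u v : Real) / (xiCount sg0.1 u : Real) - 1 / (Q : Real))^2
          ≤ 4 * (Q : Real) ^ 2 / n ^ 2 * ∑ v, W u v sg := by
        rw [Finset.mul_sum]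
        refine Finset.sum_le_sum fun v _ => ?_
        have h2 : ((ximat sg0.1 sg.1 u v : Real) / (xiCount sg0.1 u : Real) - 1 / (Q : Real))^2
            = 1 / (xiCount sg0.1 u : Real) ^ 2 * W u v sg := by
          have := (hmpos u).ne'
          simp only [hW]
          field_simp
        rw [h2]
        refine mul_le_mul_of_nonneg_right ?_ (hW0 u v sg)
        calc 1 / (xiCount sg0.1 u : Real) ^ 2 ≤ 1 / ((n : Real) / (2 * Q)) ^ 2 :=
              one_div_le_one_div_of_le (by positivity)
                (pow_le_pow_left₀ (by positivity) (hm u) 2)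
          _ = 4 * (Q : Real) ^ 2 / n ^ 2 := by field_simp; ring
      have h3 : 1 ≤ 4 * (Q : Real) ^ 2 / (n * R ^ 2) * ∑ v, W u v sg := by
        have h4 := (hu.le.trans h1)
        have h5 : 4 * (Q : Real) ^ 2 / (n * R ^ 2) * ∑ v, W u v sg
            = (4 * (Q : Real) ^ 2 / n ^ 2 * ∑ v, W u v sg) / (R ^ 2 / n) := by
          field_simp
        rw [h5, le_div_iff₀ (by positivity), one_mul]
        exact h4
      calc E sg = E sg * 1 := (mul_one _).symm
        _ ≤ E sg * (4 * (Q : Real) ^ 2 / (n * R ^ 2) * ∑ v, W u v sg) :=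
            mul_le_mul_of_nonneg_left h3 (hE sg)
        _ = _ := by
            rw [Finset.mul_sum, Finset.mul_sum]
            refine Finset.sum_congr rfl fun v _ => ?_
            ring
    · rw [if_neg h]
      exact Finset.sum_nonneg hnn
  calc _ ≤ ∑ sg, ∑ u, ∑ v, 4 * (Q : Real) ^ 2 / (n * R ^ 2) * (E sg * W u v sg) :=
        Finset.sum_le_sum fun sg _ => hmarkov sg
    _ = ∑ u, ∑ v, 4 * (Q : Real) ^ 2 / (n * R ^ 2) * ∑ sg, E sg * W u v sg := by
        rw [Finset.sum_comm]
        refine Finset.sum_congr rfl fun u _ => ?_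
        rw [Finset.sum_comm]
        refine Finset.sum_congr rfl fun v _ => ?_
        rw [Finset.mul_sum]
    _ ≤ ∑ _u : Fin Q, ∑ _v : Fin Q, 4 * (Q : Real) ^ 2 / (n * R ^ 2) * (4 * D * n) := by
        refine Finset.sum_le_sum fun u _ => Finset.sum_le_sum fun v _ => ?_
        refine mul_le_mul_of_nonneg_left ?_ (by positivity)
        exact entry_moment hQ0 hn2' rho hrho1 hnr sg0.1 u v sgs
    _ = 16 * D * (Q : Real) ^ 2 * (Q : Real) ^ 2 / R ^ 2 := by
        simp only [Finset.sum_const, Finset.card_univ, Fintype.card_fin, nsmul_eq_mul]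
        field_simp
        ring
    _ ≤ 16 * D * (Q : Real) ^ 2 * (Q : Real) ^ 2 / R := by
        apply div_le_div_of_nonneg_left (by positivity) hRpos
        nlinarith

end CongestionPaper
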